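/- In the Černý automaton C_n (n ≥ 2), for every word w over the alphabet {a, b} and every state q ∈ Z_n, the preimage of the singleton {q} under the map δ_w induced by w satisfies |δ_w⁻¹({q})| ≤ 1 + (number of occurrences of the letter b in w). -/

import Mathlib

/-- The two-letter alphabet of the Černý automaton. -/
inductive Letter
  | a
  | b
deriving DecidableEq

/-- The action of a letter of the Černý automaton `C_n` on the state set `ZMod n`:
`a` sends `i` to `i + 1 (mod n)`, and `b` sends `n - 1` to `0` and fixes every other state. -/
def step (n : ℕ) : Letter → ZMod n → ZMod n
  | Letter.a, p => p + 1
  | Letter.b, p => if p = -1 then 0 else p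

/-- The map `δ_w` induced by a word `w`, applying letters left to right. -/
def run (n : ℕ) : List Letter → ZMod n → ZMod n
  | [], p => p
  | x :: w, p => run n w (step n x p)

/-- In the Černý automaton `C_n` (`n ≥ 2`), for every word `w` and state `q`, the
preimage of the singleton `{q}` under `δ_w` has at most `1 + (number of b's in w)`
elements. -/
theorem cerny_singleton_preimage_le (n : ℕ) (hn : 2 ≤ n) (w : List Letter) (q : ZMod n) :
    {p : ZMod n | run n w p = q}.ncard ≤ 1 + w.count Letter.b := by
  haveI : NeZero n := ⟨by omega⟩
  induction w with
  | nil => simp [run]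
  | cons x w ih =>
    cases x with
    | a =>
      have h : {p : ZMod n | run n (Letter.a :: w) p = q}
          ⊆ (fun p => p - 1) '' {p : ZMod n | run n w p = q} := by
        intro p hp
        exact ⟨p + 1, hp, by simp⟩
      have h1 := Set.ncard_le_ncard h (Set.toFinite _)
      have h2 := Set.ncard_image_le (f := fun p : ZMod n => p - 1)
        (Set.toFinite {p : ZMod n | run n w p = q})
      have h3 : (Letter.a :: w).count Letter.b = w.count Letter.b :=
        List.count_cons_of_ne (by simp)
      omega
    | b =>
      have h : {p : ZMod n | run n (Letter.b :: w) p = q}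
          ⊆ insert (-1) {p : ZMod n | run n w p = q} := by
        intro p hp
        by_cases hp1 : p = -1
        · exact Or.inl hp1
        · right
          simpa [run, step, hp1] using hp
      have h1 := Set.ncard_le_ncard h (Set.toFinite _)
      have h2 := Set.ncard_insert_le (-1) {p : ZMod n | run n w p = q}
      have h3 : (Letter.b :: w).count Letter.b = w.count Letter.b + 1 :=
        List.count_cons_self
      omega
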